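/- Let X be a real Banach space, J : X → X nonexpansive, Φ(λ,x) = λ J(((1−λ)/λ) x) for λ ∈ (0,1], and v_n = J^n(0)/n. Then there exists a continuous function λ̄ : [0,∞) → (0,1] with t·λ̄(t) → 1 as t → ∞ (i.e. λ̄(t) ~ 1/t) and a differentiable function w : [0,∞) → X satisfying w'(t) = Φ(λ̄(t), w(t)) − w(t) for all t ≥ 0, such that ‖w(n) − v_n‖ → 0 as n → ∞. -/

import Mathlib

open Filter

section Helpers

open Set Metric Topology

variable {X : Type*} [NormedAddCommGroup X] [NormedSpace ℝ X]

lemma aux_lip (J : X → X) (hJ : ∀ x y : X, ‖J x - J y‖ ≤ ‖x - y‖) :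
    LipschitzWith 2 (fun x => J x - x) := by
  refine LipschitzWith.of_dist_le_mul fun x y => ?_
  rw [dist_eq_norm, dist_eq_norm]
  calc ‖J x - x - (J y - y)‖ = ‖(J x - J y) - (x - y)‖ := by congr 1; abel
    _ ≤ ‖J x - J y‖ + ‖x - y‖ := norm_sub_le _ _
    _ ≤ ‖x - y‖ + ‖x - y‖ := by gcongr; exact hJ x y
    _ = _ := by push_cast; ring

lemma aux_local [CompleteSpace X] (f : X → X) (hf : LipschitzWith 2 f) (t₀ : ℝ) (x₀ : X) :
    ∃ α : ℝ → X, α t₀ = x₀ ∧ ∀ t ∈ Icc t₀ (t₀ + 1/4),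
      HasDerivWithinAt α (f (α t)) (Icc t₀ (t₀ + 1/4)) t := by
  have h : IsPicardLindelof (fun _ => f) (tmin := t₀) (tmax := t₀ + 1/4)
      ⟨t₀, by simp⟩ x₀ (‖f x₀‖₊) 0 (3 * ‖f x₀‖₊) 2 := by
    refine IsPicardLindelof.of_time_independent ?_ hf.lipschitzOnWith ?_
    · intro x hx
      have h1 := hf.dist_le_mul x x₀
      rw [dist_eq_norm] at h1
      rw [mem_closedBall] at hx
      have h2 : ‖f x‖ ≤ ‖f x - f x₀‖ + ‖f x₀‖ := by
        simpa using norm_add_le (f x - f x₀) (f x₀)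
      push_cast at *
      linarith
    · have := norm_nonneg (f x₀)
      have h3 : max (t₀ + 1/4 - t₀) (t₀ - t₀) = 1/4 := by norm_num
      simp only [h3]
      push_cast
      linarith
  exact h.exists_eq_forall_mem_Icc_hasDerivWithinAt₀

lemma aux_step [CompleteSpace X] (f : X → X) (hf : LipschitzWith 2 f) (x₀ : X) (n : ℕ) :
    ∃ α : ℝ → X, α 0 = x₀ ∧ ∀ t ∈ Icc (0:ℝ) (n/4),
      HasDerivWithinAt α (f (α t)) (Icc (0:ℝ) (n/4)) t := by
  induction n with
  | zero =>
    refine ⟨fun _ => x₀, rfl, fun t ht => ?_⟩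
    have : t = 0 := by simpa using ht
    subst this
    simp only [Nat.cast_zero, zero_div, Icc_self]
    exact HasFDerivWithinAt.of_subsingleton subsingleton_singleton
  | succ n ih =>
    obtain ⟨α, h0, hα⟩ := ih
    set a : ℝ := n/4 with ha
    have ha0 : 0 ≤ a := by positivity
    obtain ⟨β, hb0, hβ⟩ := aux_local f hf a (α a)
    have hs : ((n+1 : ℕ) : ℝ)/4 = a + 1/4 := by push_cast; ring
    rw [hs]
    set γ : ℝ → X := fun t => if t ≤ a then α t else β t with hγ
    have g1 : ∀ t ∈ Icc 0 a, γ t = α t := fun t ht => by simp [hγ, ht.2]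
    have g2 : ∀ t ∈ Icc a (a+1/4), γ t = β t := fun t ht => by
      rcases eq_or_lt_of_le ht.1 with h | h
      · subst h; simp [hγ, hb0]
      · simp [hγ, not_le.2 h]
    have hu : Icc 0 a ∪ Icc a (a+1/4) = Icc 0 (a+1/4) :=
      Icc_union_Icc_eq_Icc ha0 (by linarith)
    refine ⟨γ, by rw [g1 0 ⟨le_rfl, ha0⟩, h0], fun t ht => ?_⟩
    rw [← hu]
    refine HasDerivWithinAt.union ?_ ?_
    · by_cases h : t ∈ Icc 0 a
      · rw [g1 t h]
        exact (hα t h).congr g1 (g1 t h)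
      · refine HasFDerivWithinAt.of_notMem_closure ?_
        rwa [closure_Icc]
    · by_cases h : t ∈ Icc a (a+1/4)
      · rw [g2 t h]
        exact (hβ t h).congr g2 (g2 t h)
      · refine HasFDerivWithinAt.of_notMem_closure ?_
        rwa [closure_Icc]

lemma aux_right {α : ℝ → X} {v : X} {a b t : ℝ} (h : HasDerivWithinAt α v (Icc a b) t)
    (ht : t ∈ Ico a b) : HasDerivWithinAt α v (Ici t) t := by
  refine h.mono_of_mem_nhdsWithin ?_
  exact mem_of_superset (Icc_mem_nhdsGE ht.2) (Icc_subset_Icc_left ht.1)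

lemma aux_global [CompleteSpace X] (f : X → X) (hf : LipschitzWith 2 f) (x₀ : X) :
    ∃ U : ℝ → X, U 0 = x₀ ∧ ∀ t ∈ Ici (0:ℝ), HasDerivWithinAt U (f (U t)) (Ici (0:ℝ)) t := by
  choose S h0 hS using aux_step f hf x₀
  have key : ∀ m n : ℕ, m ≤ n → EqOn (S m) (S n) (Icc (0:ℝ) (m/4)) := by
    intro m n hmn
    have hmn' : (m:ℝ)/4 ≤ n/4 := by gcongr
    refine ODE_solution_unique (v := fun _ => f) (K := 2) (fun _ => hf) ?_ ?_ ?_ ?_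
      (by rw [h0, h0])
    · exact HasDerivWithinAt.continuousOn (hS m)
    · exact fun t ht => aux_right (hS m t ⟨ht.1, ht.2.le⟩) ht
    · exact (HasDerivWithinAt.continuousOn (hS n)).mono (Icc_subset_Icc_right hmn')
    · exact fun t ht => aux_right (hS n t ⟨ht.1, ht.2.le.trans hmn'⟩) ⟨ht.1, ht.2.trans_le hmn'⟩
  have key2 : ∀ (m n : ℕ) (t : ℝ), 0 ≤ t → t ≤ m/4 → t ≤ n/4 → S m t = S n t := by
    intro m n t h1 h2 h3
    rcases le_total m n with h | h
    · exact key m n h ⟨h1, h2⟩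
    · exact (key n m h ⟨h1, h3⟩).symm
  have hc : ∀ t : ℝ, t < ((⌈4*t⌉₊ + 1 : ℕ) : ℝ)/4 := by
    intro t
    have := Nat.le_ceil (4*t)
    push_cast
    linarith
  refine ⟨fun t => S (⌈4*t⌉₊ + 1) t, h0 _, fun t ht => ?_⟩
  set N := ⌈4*t⌉₊ + 1 with hN
  have h1 : HasDerivWithinAt (S N) (f (S N t)) (Ici 0) t := by
    refine (hS N t ⟨ht, (hc t).le⟩).mono_of_mem_nhdsWithin ?_
    rw [← Ici_inter_Iic]
    exact inter_mem self_mem_nhdsWithin (mem_nhdsWithin_of_mem_nhds (Iic_mem_nhds (hc t)))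
  refine h1.congr_of_eventuallyEq_of_mem ?_ ht
  have : Iic ((N:ℝ)/4) ∈ 𝓝[Ici 0] t := mem_nhdsWithin_of_mem_nhds (Iic_mem_nhds (hc t))
  filter_upwards [this, self_mem_nhdsWithin] with s hs hs0
  exact key2 _ _ s hs0 (hc s).le hs

/-- The exponentially weighted difference has the expected derivative. -/
lemma aux_exp {V : ℝ → X} {v : X} {s : Set ℝ} {t : ℝ} (h : HasDerivWithinAt V (v - V t) s t) :
    HasDerivWithinAt (fun t => Real.exp t • V t) (Real.exp t • v) s t := by
  have := (Real.hasDerivAt_exp t).hasDerivWithinAt (s := s).smul h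
  have e : Real.exp t • v = Real.exp t • (v - V t) + Real.exp t • V t := by
    rw [smul_sub]; abel
  rw [e]
  exact this

lemma aux_lin (J : X → X) (hJ : ∀ x y : X, ‖J x - J y‖ ≤ ‖x - y‖) (U : ℝ → X) (hU0 : U 0 = 0)
    (hU : ∀ t ∈ Ici (0:ℝ), HasDerivWithinAt U (J (U t) - U t) (Ici (0:ℝ)) t)
    (t : ℝ) (ht : 0 ≤ t) : ‖U t‖ ≤ (‖J 0‖ + 1) * t := by
  set C := ‖J 0‖ + 1 with hC
  have hd : ∀ t ∈ Ici (0:ℝ), HasDerivWithinAt (fun t => Real.exp t • U t)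
      (Real.exp t • J (U t)) (Ici 0) t := fun t ht => aux_exp (hU t ht)
  have hB : ∀ x : ℝ, HasDerivAt (fun t => Real.exp t * (C * t))
      (Real.exp x * (C * x) + Real.exp x * (C * 1)) x := fun x =>
    (Real.hasDerivAt_exp x).mul ((hasDerivAt_id x).const_mul C)
  have := image_norm_le_of_norm_deriv_right_lt_deriv_boundary (a := 0) (b := t)
    (f := fun t => Real.exp t • U t) (f' := fun t => Real.exp t • J (U t))
    (fun s hs => ((hd s hs.1).continuousWithinAt).mono Icc_subset_Ici_self)
    (fun s hs => (hd s hs.1).mono (Ici_subset_Ici.2 hs.1))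
    (B := fun t => Real.exp t * (C * t)) (by simp [hU0]) hB ?_ ⟨ht, le_rfl⟩
  · simp only [norm_smul, Real.norm_eq_abs, Real.abs_exp] at this
    exact le_of_mul_le_mul_left this (Real.exp_pos t)
  · intro x hx h
    simp only [norm_smul, Real.norm_eq_abs, Real.abs_exp] at h ⊢
    have h2 := mul_left_cancel₀ (Real.exp_pos x).ne' h
    rw [← mul_add]
    refine mul_lt_mul_of_pos_left ?_ (Real.exp_pos x)
    have h3 := hJ (U x) 0
    rw [sub_zero] at h3
    have h4 : ‖J (U x)‖ ≤ ‖J (U x) - J 0‖ + ‖J 0‖ := by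
      simpa using norm_add_le (J (U x) - J 0) (J 0)
    linarith

lemma aux_lipU (J : X → X) (hJ : ∀ x y : X, ‖J x - J y‖ ≤ ‖x - y‖) (U : ℝ → X) (hU0 : U 0 = 0)
    (hU : ∀ t ∈ Ici (0:ℝ), HasDerivWithinAt U (J (U t) - U t) (Ici (0:ℝ)) t)
    (t h : ℝ) (ht : 0 ≤ t) (hh : 0 ≤ h) : ‖U (t + h) - U t‖ ≤ (‖J 0‖ + 1) * h := by
  have hd : ∀ t ∈ Ici (0:ℝ), HasDerivWithinAt (fun t => Real.exp t • (U (t + h) - U t))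
      (Real.exp t • (J (U (t + h)) - J (U t))) (Ici 0) t := by
    intro t ht
    apply aux_exp
    have h1 : HasDerivWithinAt (fun t => U (t + h)) (J (U (t+h)) - U (t+h)) (Ici 0) t := by
      have := (hU (t+h) (add_nonneg ht hh)).scomp t
        (((hasDerivAt_id t).add_const h).hasDerivWithinAt (s := Ici 0))
        (fun s (hs : 0 ≤ s) => add_nonneg hs hh)
      rw [one_smul] at this
      exact this
    have e : J (U (t + h)) - J (U t) - (U (t + h) - U t)
        = J (U (t + h)) - U (t + h) - (J (U t) - U t) := by abel
    rw [e]
    exact h1.sub (hU t ht)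
  have := norm_le_gronwallBound_of_norm_deriv_right_le (a := 0) (b := t) (K := 1) (ε := 0)
    (δ := ‖U h‖)
    (f := fun t => Real.exp t • (U (t + h) - U t))
    (f' := fun t => Real.exp t • (J (U (t + h)) - J (U t)))
    (fun s hs => ((hd s hs.1).continuousWithinAt).mono Icc_subset_Ici_self)
    (fun s hs => (hd s hs.1).mono (Ici_subset_Ici.2 hs.1)) (by simp [hU0]) ?_ t ⟨ht, le_rfl⟩
  · rw [gronwallBound_ε0] at this
    simp only [norm_smul, Real.norm_eq_abs, Real.abs_exp, one_mul, sub_zero] at this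
    rw [mul_comm] at this
    exact (le_of_mul_le_mul_right this (Real.exp_pos t)).trans (aux_lin J hJ U hU0 hU h hh)
  · intro x hx
    simp only [norm_smul, Real.norm_eq_abs, Real.abs_exp, one_mul, add_zero]
    gcongr
    exact hJ _ _

lemma aux_iter (J : X → X) (hJ : ∀ x y : X, ‖J x - J y‖ ≤ ‖x - y‖) (n : ℕ) :
    ‖J^[n] 0‖ ≤ (‖J 0‖ + 1) * n := by
  induction n with
  | zero => simp
  | succ n ih =>
    rw [Function.iterate_succ_apply']
    have h3 := hJ (J^[n] 0) 0
    rw [sub_zero] at h3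
    have h4 : ‖J (J^[n] 0)‖ ≤ ‖J (J^[n] 0) - J 0‖ + ‖J 0‖ := by
      simpa using norm_add_le (J (J^[n] 0) - J 0) (J 0)
    push_cast
    linarith

lemma aux_chernoff (J : X → X) (hJ : ∀ x y : X, ‖J x - J y‖ ≤ ‖x - y‖) (U : ℝ → X)
    (hU0 : U 0 = 0)
    (hU : ∀ t ∈ Ici (0:ℝ), HasDerivWithinAt U (J (U t) - U t) (Ici (0:ℝ)) t)
    (K : ℝ) (hK : 0 < K) (n : ℕ) : ∀ (t : ℝ), 0 ≤ t →
    ‖U t - J^[n] 0‖ ≤ (‖J 0‖ + 1) * (((n - t)^2 + t) / K + K) / 2 := by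
  set C := ‖J 0‖ + 1 with hC
  have hC0 : 0 < C := by positivity
  have amgm : ∀ s : ℝ, s ≤ (s^2 / K + K) / 2 := by
    intro s
    have : (s^2 / K + K) / 2 - s = (s - K)^2 / K / 2 := by field_simp; ring
    have h2 : 0 ≤ (s - K)^2 / K / 2 := by positivity
    linarith
  induction n with
  | zero =>
    intro t ht
    have h1 := aux_lin J hJ U hU0 hU t ht
    simp only [Function.iterate_zero, id, sub_zero, Nat.cast_zero, zero_sub, neg_sq]
    refine h1.trans ?_
    rw [mul_div_assoc]
    refine mul_le_mul_of_nonneg_left ((amgm t).trans ?_) hC0.le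
    have : t^2 / K ≤ (t^2 + t)/K := by gcongr; linarith
    linarith
  | succ n ih =>
    intro t ht
    set x := J^[n+1] 0 with hx
    have hxs : x = J (J^[n] 0) := Function.iterate_succ_apply' _ _ _
    have hd : ∀ t ∈ Ici (0:ℝ), HasDerivWithinAt (fun t => Real.exp t • (U t - x))
        (Real.exp t • (J (U t) - x)) (Ici 0) t := by
      intro t ht
      apply aux_exp
      convert (hU t ht).sub_const x using 1
      abel
    have hB : ∀ s : ℝ, HasDerivAt
        (fun t : ℝ => Real.exp t * (C * (((((n+1:ℕ):ℝ) - t)^2 + t) / K + K) / 2))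
        (Real.exp s * (C * ((((n:ℝ) - s)^2 + s) / K + K) / 2)) s := by
      intro s
      have h1 : HasDerivAt (fun t : ℝ => (((n+1:ℕ):ℝ) - t)) (-1) s := by
        simpa using (hasDerivAt_id s).const_sub (((n+1:ℕ):ℝ))
      have h2 := ((((((h1.pow 2).add (hasDerivAt_id s)).div_const K).add_const K).const_mul
        C).div_const 2)
      have h3 := (Real.hasDerivAt_exp s).mul h2
      refine HasDerivAt.congr_deriv h3 ?_
      simp only [Pi.add_apply, Pi.pow_apply, id]
      push_cast
      field_simp
      ring
    have := image_norm_le_of_norm_deriv_right_le_deriv_boundary (a := 0) (b := t)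
      (f := fun t => Real.exp t • (U t - x)) (f' := fun t => Real.exp t • (J (U t) - x))
      (fun s hs => ((hd s hs.1).continuousWithinAt).mono Icc_subset_Ici_self)
      (fun s hs => (hd s hs.1).mono (Ici_subset_Ici.2 hs.1)) ?_ hB ?_ ⟨ht, le_rfl⟩
    · simp only [norm_smul, Real.norm_eq_abs, Real.abs_exp] at this
      exact le_of_mul_le_mul_left this (Real.exp_pos t)
    · simp only [Real.exp_zero, one_smul, hU0, zero_sub, norm_neg, one_mul, sub_zero, add_zero]
      refine (aux_iter J hJ (n+1)).trans ?_
      rw [mul_div_assoc]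
      exact mul_le_mul_of_nonneg_left (amgm _) hC0.le
    · intro s hs
      simp only [norm_smul, Real.norm_eq_abs, Real.abs_exp]
      refine mul_le_mul_of_nonneg_left ?_ (Real.exp_pos s).le
      rw [hxs]
      exact (hJ _ _).trans (ih s hs.1)

/-- The inverse of `b ↦ b + log b`. -/
lemma aux_b : ∃ b : ℝ → ℝ, (∀ t, 0 < b t) ∧ (∀ t, b t + Real.log (b t) = t) ∧
    (∀ t, HasDerivAt b (b t / (1 + b t)) t) ∧ Tendsto b atTop atTop := by
  have hm : StrictMono (fun y : ℝ => y + Real.exp y) :=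
    strictMono_id.add Real.exp_strictMono
  have hcont : Continuous (fun y : ℝ => y + Real.exp y) := by fun_prop
  have hs : Function.Surjective (fun y : ℝ => y + Real.exp y) := by
    refine hcont.surjective ?_ ?_
    · exact tendsto_atTop_mono (fun x => le_add_of_nonneg_right (Real.exp_pos x).le) tendsto_id
    · exact tendsto_id.atBot_add Real.tendsto_exp_atBot
  set e := hm.orderIsoOfSurjective _ hs with he
  have hev : ∀ y, e y = y + Real.exp y := fun y => rfl
  have hes : ∀ t, e.symm t + Real.exp (e.symm t) = t := fun t => by
    rw [← hev]; exact e.apply_symm_apply t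
  have hd : ∀ t, HasDerivAt e.symm (1 + Real.exp (e.symm t))⁻¹ t := by
    intro t
    refine HasDerivAt.of_local_left_inverse (f := fun y => y + Real.exp y)
      e.symm.continuous.continuousAt ?_ ?_ (Eventually.of_forall hes)
    · exact (hasDerivAt_id _).add (Real.hasDerivAt_exp _)
    · positivity
  refine ⟨fun t => Real.exp (e.symm t), fun t => Real.exp_pos _, fun t => ?_, fun t => ?_, ?_⟩
  · rw [Real.log_exp, add_comm]; exact hes t
  · exact (hd t).exp
  · exact Real.tendsto_exp_atTop.comp e.symm.tendsto_atTop

end Helpers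

/-- for a nonexpansive `J` and `Φ(λ,x) = λ J(((1-λ)/λ)x)`, there exist
a continuous parametrization `λ̄ : [0,∞) → (0,1]` with `λ̄(t) ~ 1/t` (i.e. `t λ̄(t) → 1`)
and a solution `w` of `w'(t) = Φ(λ̄(t),w(t)) - w(t)` such that
`‖w(n) - v_n‖ → 0`, where `v_n = J^n(0)/n`. -/
theorem exists_slow_parametrization_tracking_vn
    {X : Type*} [NormedAddCommGroup X] [NormedSpace ℝ X] [CompleteSpace X]
    (J : X → X) (hJ : ∀ x y : X, ‖J x - J y‖ ≤ ‖x - y‖) :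
    ∃ (lamb : ℝ → ℝ) (w : ℝ → X),
      ContinuousOn lamb (Set.Ici (0 : ℝ)) ∧
      (∀ t ≥ (0 : ℝ), lamb t ∈ Set.Ioc (0 : ℝ) 1) ∧
      Tendsto (fun t : ℝ => t * lamb t) atTop (nhds 1) ∧
      (∀ t ≥ (0 : ℝ),
        HasDerivAt w (lamb t • J (((1 - lamb t) / lamb t) • w t) - w t) t) ∧
      Tendsto (fun n : ℕ => ‖w (n : ℝ) - (n : ℝ)⁻¹ • J^[n] 0‖) atTop (nhds 0) := by
  obtain ⟨U, hU0, hU⟩ := aux_global (fun x => J x - x) (aux_lip J hJ) 0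
  obtain ⟨b, hb0, hbt, hbd, hbT⟩ := aux_b
  set C := ‖J 0‖ + 1 with hC
  have hC0 : 0 < C := by positivity
  have hbc : Continuous b := continuous_iff_continuousAt.2 fun t => (hbd t).continuousAt
  have hlog : Tendsto (fun t => Real.log (b t) / b t) atTop (nhds 0) := by
    have := (Real.isLittleO_log_id_atTop.tendsto_div_nhds_zero).comp hbT
    exact this
  have htb : Tendsto (fun t => t / b t) atTop (nhds 1) := by
    have := hlog.const_add 1
    rw [add_zero] at this
    refine this.congr fun t => ?_
    have h := hbt t
    have hp := (hb0 t).ne'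
    field_simp
    exact h
  have hbt1 : Tendsto (fun t => b t / t) atTop (nhds 1) := by
    have := htb.inv₀ one_ne_zero
    simpa using this
  refine ⟨fun t => 1 / (1 + b t), fun t => (b t)⁻¹ • U (b t), ?_, ?_, ?_, ?_, ?_⟩
  · refine Continuous.continuousOn ?_
    refine continuous_const.div (by fun_prop) fun t => ?_
    have := hb0 t
    positivity
  · intro t _
    have := hb0 t
    refine ⟨by positivity, ?_⟩
    rw [div_le_one (by positivity)]
    linarith
  · have h1 : Tendsto (fun t => (1 + b t) / b t) atTop (nhds 1) := by
      have := (tendsto_inv_atTop_zero.comp hbT).add_const 1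
      rw [zero_add] at this
      refine this.congr fun t => ?_
      have hp := (hb0 t).ne'
      simp only [Function.comp]
      field_simp
    have := htb.div h1 one_ne_zero
    rw [div_one] at this
    refine this.congr fun t => ?_
    have hp := hb0 t
    simp only [Pi.div_apply]
    field_simp
  · intro t _
    have hp := hb0 t
    have hUd : HasDerivAt U (J (U (b t)) - U (b t)) (b t) :=
      (hU (b t) hp.le).hasDerivAt (Ici_mem_nhds hp)
    have h1 := ((hbd t).inv hp.ne').smul (hUd.scomp t (hbd t))
    have h2 : (1 - 1 / (1 + b t)) / (1 / (1 + b t)) = b t := by field_simp; ring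
    rw [h2, smul_smul, mul_inv_cancel₀ hp.ne', one_smul]
    refine HasDerivAt.congr_deriv h1 ?_
    simp only [Function.comp, Pi.inv_apply, smul_sub, smul_smul]
    have e1 : (b t)⁻¹ * (b t / (1 + b t)) = 1 / (1 + b t) := by field_simp
    have e2 : -(b t / (1 + b t)) / b t ^ 2 = 1 / (1 + b t) - (b t)⁻¹ := by field_simp; ring
    rw [e1, e2, sub_smul]
    abel
  · have hlipU : ∀ s t : ℝ, 0 ≤ s → 0 ≤ t → ‖U s - U t‖ ≤ C * |s - t| := by
      intro s t hs ht
      rcases le_total t s with h | h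
      · have := aux_lipU J hJ U hU0 hU t (s - t) ht (by linarith)
        rw [abs_of_nonneg (by linarith)]
        simpa using this
      · have := aux_lipU J hJ U hU0 hU s (t - s) hs (by linarith)
        rw [abs_of_nonpos (by linarith), norm_sub_rev]
        simpa using this
    have hz1 : Tendsto (fun n : ℕ => |1 - b n / n|) atTop (nhds 0) := by
      have := ((hbt1.comp tendsto_natCast_atTop_atTop).const_sub 1).abs
      simpa using this
    have hz2 : Tendsto (fun n : ℕ => (Real.sqrt n)⁻¹) atTop (nhds 0) :=
      tendsto_inv_atTop_zero.comp (Real.tendsto_sqrt_atTop.comp tendsto_natCast_atTop_atTop)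
    have hz : Tendsto (fun n : ℕ => 2 * C * |1 - b n / n| + C * (Real.sqrt n)⁻¹) atTop
        (nhds 0) := by
      simpa using (hz1.const_mul (2 * C)).add (hz2.const_mul C)
    refine squeeze_zero' (Eventually.of_forall fun _ => norm_nonneg _) ?_ hz
    filter_upwards [eventually_gt_atTop 0] with n hn
    have hn0 : (0:ℝ) < n := by exact_mod_cast hn
    have hp := hb0 n
    have hsq : 0 < Real.sqrt n := Real.sqrt_pos.2 hn0
    have hss := Real.mul_self_sqrt hn0.le
    have key : (b n)⁻¹ • U (b n) - (n:ℝ)⁻¹ • J^[n] 0 = ((b n)⁻¹ - (n:ℝ)⁻¹) • U (b n)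
        + (n:ℝ)⁻¹ • (U (b n) - U n) + (n:ℝ)⁻¹ • (U n - J^[n] 0) := by
      simp only [sub_smul, smul_sub]; abel
    have habs : |b n - n| = n * |1 - b n / n| := by
      rw [← abs_of_pos hn0, ← abs_mul, abs_of_pos hn0, abs_sub_comm]
      congr 1; field_simp
    have t1 : ‖((b n)⁻¹ - (n:ℝ)⁻¹) • U (b n)‖ ≤ C * |1 - b n / n| := by
      have e : ((b n)⁻¹ - (n:ℝ)⁻¹) = (b n)⁻¹ * (1 - b n / n) := by field_simp
      rw [norm_smul, e, norm_mul, Real.norm_eq_abs, Real.norm_eq_abs, abs_of_pos (inv_pos.2 hp)]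
      calc _ ≤ (b n)⁻¹ * |1 - b n / n| * (C * b n) := by
            gcongr; exact aux_lin J hJ U hU0 hU (b n) hp.le
        _ = _ := by field_simp
    have t2 : ‖(n:ℝ)⁻¹ • (U (b n) - U n)‖ ≤ C * |1 - b n / n| := by
      rw [norm_smul, Real.norm_eq_abs, abs_of_pos (inv_pos.2 hn0)]
      calc _ ≤ (n:ℝ)⁻¹ * (C * |b n - n|) := by gcongr; exact hlipU _ _ hp.le hn0.le
        _ = _ := by rw [habs]; field_simp
    have t3 : ‖(n:ℝ)⁻¹ • (U n - J^[n] 0)‖ ≤ C * (Real.sqrt n)⁻¹ := by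
      rw [norm_smul, Real.norm_eq_abs, abs_of_pos (inv_pos.2 hn0)]
      have h := aux_chernoff J hJ U hU0 hU (Real.sqrt n) hsq n n hn0.le
      have e : (((n:ℝ) - n)^2 + n) / Real.sqrt n = Real.sqrt n := by
        rw [sub_self, div_eq_iff hsq.ne', hss]; ring
      rw [e] at h
      calc _ ≤ (n:ℝ)⁻¹ * (C * (Real.sqrt n + Real.sqrt n) / 2) := by gcongr
        _ = C * ((n:ℝ)⁻¹ * Real.sqrt n) := by ring
        _ = C * (Real.sqrt n)⁻¹ := by
          congr 1
          rw [inv_mul_eq_iff_eq_mul₀ hn0.ne', ← div_eq_mul_inv, eq_div_iff hsq.ne', hss]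
    simp only [key]
    refine (norm_add₃_le).trans ?_
    linarith
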